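/- Let m ≥ 4 be even (the group G(m,m,2)). Then there is an isomorphism of R-modules S/(z) ≅ (⊕_{j=1}^{(m−2)/2} Coker([[Y, 2X^{m−j}],[2X^{j}, Y]])^{2}) ⊕ R/(Y + 2X^{m/2}) ⊕ R/(Y − 2X^{m/2}) ⊕ R/(Y² − 4X^m), where M^{2} denotes the direct sum of two copies of the module M. -/

import Mathlib

/-!
Give `x` degree `1` and `y` degree `-1` in `ℤ/m`. Then `φ(X)`, `φ(Y)` and `z` all have degree `0`, so
`S/(z)` is the direct sum of its `m` homogeneous components as an `R`-module. In `S/(z)` one has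
`x^m = y^m`, so `Y/2` acts as `x^m`. For `0 ≤ i < m` the component of degree `i` is generated by
`u = x^i` and `v = y^(m-i)`, and its relations are `Y u = 2 X^i v` and `Y v = 2 X^(m-i) u`; hence it
is the cokernel of `[[Y, 2X^(m-i)], [2X^i, Y]]`, after changing the sign of `v`.

Exchanging the generators shows that degrees `j` and `m - j` give the same cokernel. In degree `0`
the relation `Y u = 2 v` eliminates `v` and leaves `R/(Y² - 4X^m)`. In degree `m/2` the matrix
becomes diagonal in the basis `u - v`, `u + v`, with entries `Y + 2X^(m/2)` and `Y - 2X^(m/2)`.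

That there are no further relations is proved in `exists_lift`, which describes maps out of `S/(z)`
by their values on monomials, and `Piece.exists_coord`, which applies it to any module with
such generators and relations (a `Piece`) to obtain a projection of `S/(z)` onto it. `nonempty_equiv_pi`
puts the components together.
-/

open MvPolynomial

noncomputable section

/-- `S = ℂ[x,y]` -/
abbrev Spoly : Type := MvPolynomial Bool ℂ

/-- `R = ℂ[X,Y]` -/
abbrev Rpoly : Type := MvPolynomial (Fin 2) ℂ

def xv : Spoly := X false
def yv : Spoly := X true
def Xv : Rpoly := X 0
def Yv : Rpoly := X 1

/-- The map `R → S`, `X ↦ xy`, `Y ↦ x^m + y^m` (basic invariants of `G(m,m,2)`). -/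
def phi (m : ℕ) : Rpoly →+* Spoly :=
  (aeval ![xv * yv, xv ^ m + yv ^ m]).toRingHom

/-- `z = x^m - y^m`. -/
def zpol (m : ℕ) : Spoly := xv ^ m - yv ^ m

/-- Cokernel of a 2×2 matrix over `R`. -/
abbrev coker (A : Matrix (Fin 2) (Fin 2) Rpoly) : Type :=
  (Fin 2 → Rpoly) ⧸ LinearMap.range A.mulVecLin

/-! ### The module `S/(z)` and the action on monomials -/

/-- `S/(z)` with its `R`-module structure through `φ`. It is a `def` rather than an abbreviation so
that instance search does not look for other `R`-actions on the quotient ring. -/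
def Qz (m : ℕ) : Type := Spoly ⧸ Ideal.span {zpol m}

instance (m : ℕ) : AddCommGroup (Qz m) :=
  inferInstanceAs (AddCommGroup (Spoly ⧸ Ideal.span {zpol m}))

instance (m : ℕ) : Module Rpoly (Qz m) :=
  ((Ideal.Quotient.mk (Ideal.span {zpol m})).comp (phi m)).toModule

/-- The quotient map `S → S/(z)`, as an additive map. -/
def mkQz (m : ℕ) : Spoly →+ Qz m := (Ideal.Quotient.mk (Ideal.span {zpol m})).toAddMonoidHom

/-- The class of `x^a y^b` in `S/(z)`. -/
def mon (m a b : ℕ) : Qz m := mkQz m (xv ^ a * yv ^ b)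

/-- `Y/2 ∈ R`. Since `x^m = y^m` in `S/(z)`, it acts there as multiplication by `x^m`. -/
def Hv : Rpoly := C (1 / 2) * Yv

lemma Hv_add : Hv + Hv = Yv := by
  rw [Hv, ← add_mul, ← C_add]; norm_num

lemma two_Hv : (2 : Rpoly) * Hv = Yv := by rw [two_mul, Hv_add]

lemma smul_mk (m : ℕ) (r : Rpoly) (s : Spoly) :
    r • mkQz m s = mkQz m (phi m r * s) :=
  (map_mul (Ideal.Quotient.mk (Ideal.span {zpol m})) (phi m r) s).symm

lemma mkQz_surjective (m : ℕ) : Function.Surjective (mkQz m) := Ideal.Quotient.mk_surjective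

lemma phi_Xv (m : ℕ) : phi m Xv = xv * yv := by simp [phi, Xv]

lemma phi_Yv (m : ℕ) : phi m Yv = xv ^ m + yv ^ m := by simp [phi, Yv]

lemma phi_C (m : ℕ) (c : ℂ) : phi m (C c) = C c := by
  simp [phi, MvPolynomial.algebraMap_eq]

lemma Xv_pow_smul_mon (m a b k : ℕ) : Xv ^ k • mon m a b = mon m (a + k) (b + k) := by
  rw [mon, smul_mk, mon, map_pow, phi_Xv]; congr 1; ring

lemma mon_shift (m a b : ℕ) : mon m (a + m) b = mon m a (b + m) := by
  refine (Ideal.Quotient.eq.trans Ideal.mem_span_singleton).2 ?_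
  exact ⟨xv ^ a * yv ^ b, by rw [zpol]; ring⟩

lemma Hv_smul_mon (m a b : ℕ) : Hv • mon m a b = mon m (a + m) b := by
  have h : Yv • mon m a b = mon m (a + m) b + mon m a (b + m) := by
    rw [mon, smul_mk, mon, mon, ← map_add, phi_Yv]; congr 1; ring
  rw [Hv, mul_smul, h, ← mon_shift, mon, ← map_add, smul_mk, phi_C]
  congr 1
  rw [← two_mul, ← mul_assoc, show (2 : Spoly) = C 2 from (map_ofNat C 2).symm, ← C_mul]
  norm_num

lemma Hv_pow_smul_mon (m a b k : ℕ) : Hv ^ k • mon m a b = mon m (a + k * m) b := by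
  induction k with
  | zero => simp
  | succ k ih => rw [pow_succ', mul_smul, ih, Hv_smul_mon]; congr 1; ring

lemma mon_shift_mul (m a b k : ℕ) : mon m (a + k * m) b = mon m a (b + k * m) := by
  induction k generalizing a with
  | zero => simp
  | succ k ih =>
    rw [show a + (k + 1) * m = a + m + k * m by ring, ih, mon_shift]; congr 1; ring

lemma monomial_eq_xy (s : Bool →₀ ℕ) (c : ℂ) :
    (monomial s c : Spoly) = c • (xv ^ s false * yv ^ s true) := by
  rw [monomial_eq, Finsupp.prod_fintype _ _ (by simp), smul_eq_C_mul]
  simp [xv, yv, mul_comm]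

lemma hom_ext_xy {N : Type} [AddCommGroup N] [Module ℂ N] {f g : Spoly →ₗ[ℂ] N}
    (h : ∀ a b : ℕ, f (xv ^ a * yv ^ b) = g (xv ^ a * yv ^ b)) : f = g := by
  refine LinearMap.ext fun p => ?_
  induction p using MvPolynomial.induction_on' with
  | monomial s c => rw [monomial_eq_xy, map_smul, map_smul, h]
  | add p q hp hq => rw [map_add, map_add, hp, hq]

/-- `S/(z)` is the universal `R`-module on symbols `x^a y^b` on which `X` shifts both exponents by
one and `Y/2` shifts either exponent by `m`. The map is built `ℂ`-linearly on the monomial basis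
of `S` and then seen to be `R`-linear and to vanish on `(z)`. -/
lemma exists_lift (m : ℕ) {N : Type} [AddCommGroup N] [Module Rpoly N] [Module ℂ N]
    [IsScalarTower ℂ Rpoly N] (g : ℕ → ℕ → N)
    (hX : ∀ a b, g (a + 1) (b + 1) = Xv • g a b)
    (h1 : ∀ a b, g (a + m) b = Hv • g a b) (h2 : ∀ a b, g a (b + m) = Hv • g a b) :
    ∃ G : Qz m →ₗ[Rpoly] N, ∀ a b, G (mon m a b) = g a b := by
  let F : Spoly →ₗ[ℂ] N := (basisMonomials Bool ℂ).constr ℂ fun s => g (s false) (s true)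
  have hF : ∀ a b : ℕ, F (xv ^ a * yv ^ b) = g a b := by
    intro a b
    have h := (basisMonomials Bool ℂ).constr_basis ℂ (fun s => g (s false) (s true))
      (Finsupp.single false a + Finsupp.single true b)
    rw [coe_basisMonomials] at h
    simp only [monomial_eq_xy] at h
    simpa [F] using h
  have hFX : ∀ p, F (xv * yv * p) = Xv • F p := by
    intro p
    have : F ∘ₗ LinearMap.mulLeft ℂ (xv * yv) = (Module.toModuleEnd ℂ N Xv) ∘ₗ F := by
      apply hom_ext_xy
      intro a b
      simp only [LinearMap.comp_apply, LinearMap.mulLeft_apply]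
      rw [show xv * yv * (xv ^ a * yv ^ b) = xv ^ (a + 1) * yv ^ (b + 1) by ring, hF, hF, hX]
      rfl
    exact LinearMap.congr_fun this p
  have hFx : ∀ p, F (xv ^ m * p) = Hv • F p := by
    intro p
    have : F ∘ₗ LinearMap.mulLeft ℂ (xv ^ m) = (Module.toModuleEnd ℂ N Hv) ∘ₗ F := by
      apply hom_ext_xy
      intro a b
      simp only [LinearMap.comp_apply, LinearMap.mulLeft_apply]
      rw [show xv ^ m * (xv ^ a * yv ^ b) = xv ^ (a + m) * yv ^ b by ring, hF, hF, h1]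
      rfl
    exact LinearMap.congr_fun this p
  have hFy : ∀ p, F (yv ^ m * p) = Hv • F p := by
    intro p
    have : F ∘ₗ LinearMap.mulLeft ℂ (yv ^ m) = (Module.toModuleEnd ℂ N Hv) ∘ₗ F := by
      apply hom_ext_xy
      intro a b
      simp only [LinearMap.comp_apply, LinearMap.mulLeft_apply]
      rw [show yv ^ m * (xv ^ a * yv ^ b) = xv ^ a * yv ^ (b + m) by ring, hF, hF, h2]
      rfl
    exact LinearMap.congr_fun this p
  have hFR : ∀ (r : Rpoly) (p : Spoly), F (phi m r * p) = r • F p := by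
    intro r
    induction r using MvPolynomial.induction_on with
    | C c =>
      intro p
      rw [phi_C, ← smul_eq_C_mul, map_smul, ← algebraMap_smul Rpoly c (F p)]
      rfl
    | add r s hr hs => intro p; rw [map_add, add_mul, map_add, hr, hs, add_smul]
    | mul_X r n hr =>
      intro p
      rw [(phi m).map_mul, mul_assoc, hr, mul_smul]
      congr 1
      fin_cases n
      · exact (congrArg (fun q => F (q * p)) (phi_Xv m)).trans (hFX p)
      · refine (congrArg (fun q => F (q * p)) (phi_Yv m)).trans ?_
        rw [add_mul, map_add, hFx, hFy, ← add_smul, Hv_add]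
        rfl
  have hker : ∀ p ∈ Ideal.span {zpol m}, F.toAddMonoidHom p = 0 := by
    intro p hp
    obtain ⟨q, rfl⟩ := Ideal.mem_span_singleton.1 hp
    change F (zpol m * q) = 0
    rw [zpol, sub_mul, map_sub, hFx, hFy, sub_self]
  refine ⟨{ toFun := QuotientAddGroup.lift (Submodule.toAddSubgroup (Ideal.span {zpol m}))
              F.toAddMonoidHom hker
            map_add' := fun p q => map_add _ p q
            map_smul' := ?_ }, fun a b => hF a b⟩
  intro r q
  obtain ⟨p, rfl⟩ := mkQz_surjective _ q
  exact hFR r p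

/-! ### Modules presented like a homogeneous component of `S/(z)` -/

/-- An `R`-module `N` with generators `u`, `v` satisfying `(Y/2) u = X^i v` and
`(Y/2) v = X^(m-i) u`, mapping to `S/(z)` by `u ↦ x^i`, `v ↦ y^(m-i)`. For `i < m` this forces `N`
to be the component of `S/(z)` spanned by the `x^a y^b` with `a - b ≡ i` modulo `m`. -/
structure Piece (m i : ℕ) (N : Type) [AddCommGroup N] [Module Rpoly N] where
  u : N
  v : N
  Hv_smul_u : Hv • u = Xv ^ i • v
  Hv_smul_v : Hv • v = Xv ^ (m - i) • u
  span_eq : Submodule.span Rpoly {u, v} = ⊤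
  toQz : N →ₗ[Rpoly] Qz m
  toQz_u : toQz u = mon m i 0
  toQz_v : toQz v = mon m 0 (m - i)

/-- A monomial `x^a y^b` has degree `i` modulo `m` exactly when it is `x^i` or `y^(m-i)` times
powers of `xy` and of `x^m` or `y^m`. -/
lemma trichotomy {m i : ℕ} (hi : i < m) (a b : ℕ) :
    (∃ k, a = b + i + k * m) ∨ (∃ k, b = a + (m - i) + k * m) ∨ ¬ a ≡ b + i [MOD m] := by
  by_cases h : a ≡ b + i [MOD m]
  · rcases le_or_gt (b + i) a with hle | hlt
    · obtain ⟨k, hk⟩ := (Nat.modEq_iff_dvd' hle).1 h.symm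
      exact Or.inl ⟨k, by rw [mul_comm]; omega⟩
    · obtain ⟨k, hk⟩ := (Nat.modEq_iff_dvd' hlt.le).1 h
      cases k with
      | zero => omega
      | succ k =>
        refine Or.inr (Or.inl ⟨k, ?_⟩)
        rw [mul_comm k m]
        rw [mul_add, mul_one] at hk
        omega
  · exact Or.inr (Or.inr h)

variable {m i : ℕ} {N : Type} [AddCommGroup N] [Module Rpoly N]

/-- The element of `N` that represents the monomial `x^a y^b`, and `0` if the degree `a - b` is not
`i` modulo `m`. The natural subtractions do not truncate in the branches where they are used
(for `i < m`), and the divisions by `m` are exact. -/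
def Piece.coeff (P : Piece m i N) (a b : ℕ) : N :=
  open Classical in
  if a ≡ b + i [MOD m] then
    if b + i ≤ a then (Xv ^ b * Hv ^ ((a - (b + i)) / m)) • P.u
    else (Xv ^ a * Hv ^ ((b - a - (m - i)) / m)) • P.v
  else 0

lemma Piece.coeff_u (P : Piece m i N) (hi : i < m) (b k : ℕ) :
    P.coeff (b + i + k * m) b = (Xv ^ b * Hv ^ k) • P.u := by
  rw [Piece.coeff, if_pos (by simp [Nat.ModEq]), if_pos (by omega), Nat.add_sub_cancel_left,
    Nat.mul_div_cancel _ (by omega)]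

lemma Piece.coeff_v (P : Piece m i N) (hi : i < m) (a k : ℕ) :
    P.coeff a (a + (m - i) + k * m) = (Xv ^ a * Hv ^ k) • P.v := by
  have h : a + (m - i) + k * m + i = a + (k + 1) * m := by rw [add_mul]; omega
  rw [Piece.coeff, if_pos (by rw [h]; simp [Nat.ModEq]), if_neg (by omega),
    show a + (m - i) + k * m - a - (m - i) = k * m by omega,
    Nat.mul_div_cancel _ (by omega)]

lemma Piece.coeff_zero (P : Piece m i N) {a b : ℕ} (h : ¬ a ≡ b + i [MOD m]) :
    P.coeff a b = 0 := if_neg h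

lemma Piece.Xv_pow_u (P : Piece m i N) (hi : i < m) : Xv ^ m • P.u = (Hv * Hv) • P.u := by
  rw [mul_smul, P.Hv_smul_u, smul_comm, P.Hv_smul_v, smul_smul, ← pow_add]; congr 2; omega

lemma Piece.Xv_pow_v (P : Piece m i N) (hi : i < m) : Xv ^ m • P.v = (Hv * Hv) • P.v := by
  rw [mul_smul, P.Hv_smul_v, smul_comm, P.Hv_smul_u, smul_smul, ← pow_add]; congr 2; omega

/-- The projection of `S/(z)` onto a piece, which sends monomials of other degrees to `0`. -/
lemma Piece.exists_coord [Module ℂ N] [IsScalarTower ℂ Rpoly N] (P : Piece m i N) (hi : i < m) :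
    ∃ G : Qz m →ₗ[Rpoly] N, ∀ a b, G (mon m a b) = P.coeff a b := by
  apply exists_lift
  · intro a b
    rcases trichotomy hi a b with ⟨k, rfl⟩ | ⟨k, rfl⟩ | h
    · rw [show b + i + k * m + 1 = b + 1 + i + k * m by ring, P.coeff_u hi, P.coeff_u hi,
        smul_smul]
      congr 1; ring
    · rw [show a + (m - i) + k * m + 1 = a + 1 + (m - i) + k * m by ring, P.coeff_v hi,
        P.coeff_v hi, smul_smul]
      congr 1; ring
    · rw [P.coeff_zero h, smul_zero, P.coeff_zero]
      rw [show b + 1 + i = b + i + 1 by ring]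
      exact fun h' => h (Nat.ModEq.add_right_cancel' 1 h')
  · intro a b
    rcases trichotomy hi a b with ⟨k, rfl⟩ | ⟨k, rfl⟩ | h
    · rw [show b + i + k * m + m = b + i + (k + 1) * m by ring, P.coeff_u hi, P.coeff_u hi,
        smul_smul]
      congr 1; ring
    · rw [P.coeff_v hi]
      cases k with
      | zero =>
        have h := P.coeff_u hi (a + (m - i) + 0 * m) 0
        rw [show a + (m - i) + 0 * m + i + 0 * m = a + m by omega] at h
        rw [h, pow_zero, mul_one, mul_one, smul_comm, P.Hv_smul_v, smul_smul, ← pow_add]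
        simp
      | succ k =>
        rw [show a + (m - i) + (k + 1) * m = a + m + (m - i) + k * m by ring, P.coeff_v hi,
          pow_add, mul_right_comm, mul_smul, P.Xv_pow_v hi, smul_smul, smul_smul]
        congr 1; ring
    · rw [P.coeff_zero h, smul_zero, P.coeff_zero]
      simpa [Nat.ModEq] using h
  · intro a b
    rcases trichotomy hi a b with ⟨k, rfl⟩ | ⟨k, rfl⟩ | h
    · rw [P.coeff_u hi]
      cases k with
      | zero =>
        have h := P.coeff_v hi (b + i + 0 * m) 0
        rw [show b + i + 0 * m + (m - i) + 0 * m = b + m by omega] at h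
        rw [h, pow_zero, mul_one, mul_one, smul_comm, P.Hv_smul_u, smul_smul, ← pow_add]
        simp
      | succ k =>
        rw [show b + i + (k + 1) * m = b + m + i + k * m by ring, P.coeff_u hi,
          pow_add, mul_right_comm, mul_smul, P.Xv_pow_u hi, smul_smul, smul_smul]
        congr 1; ring
    · rw [show a + (m - i) + k * m + m = a + (m - i) + (k + 1) * m by ring, P.coeff_v hi,
        P.coeff_v hi, smul_smul]
      congr 1; ring
    · rw [P.coeff_zero h, smul_zero, P.coeff_zero]
      rw [show b + m + i = b + i + m by ring]
      simpa [Nat.ModEq] using h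

lemma Piece.hom_ext {N' : Type} [AddCommGroup N'] [Module Rpoly N'] (P : Piece m i N)
    {f g : N →ₗ[Rpoly] N'} (hu : f P.u = g P.u) (hv : f P.v = g P.v) : f = g := by
  apply LinearMap.ext_on P.span_eq
  rintro _ (rfl | rfl)
  · exact hu
  · exact hv

lemma Piece.coeff_self_u (P : Piece m i N) (hi : i < m) : P.coeff i 0 = P.u := by
  simpa using P.coeff_u hi 0 0

lemma Piece.coeff_self_v (P : Piece m i N) (hi : i < m) : P.coeff 0 (m - i) = P.v := by
  simpa using P.coeff_v hi 0 0

lemma Piece.toQz_coeff (P : Piece m i N) (hi : i < m) {a b : ℕ} (h : a ≡ b + i [MOD m]) :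
    P.toQz (P.coeff a b) = mon m a b := by
  rcases trichotomy hi a b with ⟨k, rfl⟩ | ⟨k, rfl⟩ | hn
  · rw [P.coeff_u hi, map_smul, P.toQz_u, mul_smul, Hv_pow_smul_mon, Xv_pow_smul_mon]
    congr 1 <;> ring
  · rw [P.coeff_v hi, map_smul, P.toQz_v, mul_smul, Hv_pow_smul_mon, mon_shift_mul,
      Xv_pow_smul_mon]
    congr 1 <;> ring
  · exact (hn h).elim

/-- Two pieces of the same degree are isomorphic: both are the same component of `S/(z)`. -/
lemma Piece.nonempty_equiv [Module ℂ N] [IsScalarTower ℂ Rpoly N]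
    {N' : Type} [AddCommGroup N'] [Module Rpoly N'] [Module ℂ N'] [IsScalarTower ℂ Rpoly N']
    (P : Piece m i N) (P' : Piece m i N') (hi : i < m) : Nonempty (N ≃ₗ[Rpoly] N') := by
  obtain ⟨G, hG⟩ := P.exists_coord hi
  obtain ⟨G', hG'⟩ := P'.exists_coord hi
  refine ⟨LinearEquiv.ofLinearMap (G' ∘ₗ P.toQz) (G ∘ₗ P'.toQz) ?_ ?_⟩
  · apply P'.hom_ext <;>
      simp [P.toQz_u, P'.toQz_u, P.toQz_v, P'.toQz_v, hG, hG', P.coeff_self_u hi,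
        P.coeff_self_v hi, P'.coeff_self_u hi, P'.coeff_self_v hi]
  · apply P.hom_ext <;>
      simp [P.toQz_u, P'.toQz_u, P.toQz_v, P'.toQz_v, hG, hG', P.coeff_self_u hi,
        P.coeff_self_v hi, P'.coeff_self_u hi, P'.coeff_self_v hi]

lemma qz_hom_ext {N' : Type} [AddCommGroup N'] [Module Rpoly N'] {f g : Qz m →ₗ[Rpoly] N'}
    (h : ∀ a b, f (mon m a b) = g (mon m a b)) : f = g := by
  refine LinearMap.ext fun q => ?_
  obtain ⟨p, rfl⟩ := mkQz_surjective _ q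
  induction p using MvPolynomial.induction_on' with
  | monomial s c =>
    have : mkQz m (monomial s c) =
        (C c : Rpoly) • mon m (s false) (s true) := by
      rw [monomial_eq_xy, mon, smul_mk, phi_C, smul_eq_C_mul]
    rw [this, map_smul, map_smul, h]
  | add p q hp hq => rw [map_add, map_add, map_add, hp, hq]

/-- `S/(z)` is the product of a family of pieces whose degrees run once through `0, …, m - 1`. -/
lemma nonempty_equiv_pi (hm : 0 < m) {ι : Type} [Fintype ι] [DecidableEq ι] (c : ι → ℕ)
    (hlt : ∀ k, c k < m) (hinj : Function.Injective c) (hsurj : ∀ i < m, ∃ k, c k = i)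
    (N : ι → Type) [∀ k, AddCommGroup (N k)] [∀ k, Module Rpoly (N k)] [∀ k, Module ℂ (N k)]
    [∀ k, IsScalarTower ℂ Rpoly (N k)] (P : ∀ k, Piece m (c k) (N k)) :
    Nonempty (Qz m ≃ₗ[Rpoly] ∀ k, N k) := by
  choose G hG using fun k => (P k).exists_coord (hlt k)
  have hne : ∀ {j k}, j ≠ k → ¬ c j ≡ c k [MOD m] := fun {j k} hjk h =>
    hjk (hinj (Nat.ModEq.eq_of_lt_of_lt h (hlt j) (hlt k)))
  let Φ : (∀ k, N k) →ₗ[Rpoly] Qz m := ∑ k, (P k).toQz ∘ₗ LinearMap.proj k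
  have hΦ : ∀ n, Φ n = ∑ k, (P k).toQz (n k) := fun n => by simp [Φ]
  have hΦs : ∀ j n, Φ (Pi.single j n) = (P j).toQz n := fun j n => by
    rw [hΦ, Finset.sum_eq_single j _ (by simp), Pi.single_eq_same]
    intro k _ hk
    rw [Pi.single_eq_of_ne hk, map_zero]
  refine ⟨LinearEquiv.ofLinearMap (LinearMap.pi G) Φ ?_ ?_⟩
  · apply LinearMap.pi_ext'
    intro j
    apply (P j).hom_ext
    · ext k
      simp only [LinearMap.comp_apply, LinearMap.id_apply, LinearMap.coe_single, hΦs,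
        LinearMap.pi_apply, (P j).toQz_u, hG]
      by_cases hjk : j = k
      · subst hjk
        rw [Pi.single_eq_same, (P j).coeff_self_u (hlt j)]
      · rw [Pi.single_eq_of_ne (Ne.symm hjk), (P k).coeff_zero]
        rw [zero_add]
        exact hne hjk
    · ext k
      simp only [LinearMap.comp_apply, LinearMap.id_apply, LinearMap.coe_single, hΦs,
        LinearMap.pi_apply, (P j).toQz_v, hG]
      by_cases hjk : j = k
      · subst hjk
        rw [Pi.single_eq_same, (P j).coeff_self_v (hlt j)]
      · rw [Pi.single_eq_of_ne (Ne.symm hjk), (P k).coeff_zero]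
        intro h
        apply hne hjk
        have h' := h.add_right (c j)
        rw [zero_add, show m - c j + c k + c j = c k + m by have := hlt j; omega] at h'
        simpa [Nat.ModEq] using h'
  · apply qz_hom_ext
    intro a b
    simp only [LinearMap.comp_apply, LinearMap.id_apply, hΦ, LinearMap.pi_apply, hG]
    -- `a + (m - 1) b` represents `a - b` modulo `m` without subtraction
    obtain ⟨k, hk⟩ := hsurj ((a + (m - 1) * b) % m) (Nat.mod_lt _ hm)
    have hab : a ≡ b + c k [MOD m] := by
      have h1 : b + c k ≡ b + (a + (m - 1) * b) [MOD m] := by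
        rw [hk]; exact (Nat.mod_modEq _ _).add_left b
      refine (h1.trans ?_).symm
      obtain ⟨n, rfl⟩ := Nat.exists_eq_add_of_le' hm
      rw [show b + (a + (n + 1 - 1) * b) = a + (n + 1) * b by
        rw [Nat.add_sub_cancel]; ring]
      simp [Nat.ModEq]
    rw [Finset.sum_eq_single k _ (by simp), (P k).toQz_coeff (hlt k) hab]
    intro j _ hj
    rw [(P j).coeff_zero, map_zero]
    exact fun h => hne hj (Nat.ModEq.add_left_cancel' b (h.symm.trans hab))

/-! ### The summands as pieces -/

lemma half_two (q : Rpoly) : C (1 / 2) * (2 * q) = q := by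
  rw [← mul_assoc, show (2 : Rpoly) = C 2 from (map_ofNat C 2).symm, ← C_mul]
  norm_num

lemma half_smul {a b : N} {q : Rpoly} (h : Yv • a + (2 * q) • b = 0) :
    Hv • a = q • (-b) := by
  rw [Hv, mul_smul, eq_neg_of_add_eq_zero_left h, ← smul_neg, smul_smul, half_two]

section Coker

variable (p q : Rpoly)

/-- The cokernel of `[[Y, 2p], [2q, Y]]`. -/
abbrev ck : Type := coker !![Yv, 2 * p; 2 * q, Yv]

/-- The class of the first basis vector. -/
def ck0 : ck p q := Submodule.Quotient.mk ![1, 0]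

/-- The class of the second basis vector. -/
def ck1 : ck p q := Submodule.Quotient.mk ![0, 1]

lemma ck_rel0 : Yv • ck0 p q + (2 * q) • ck1 p q = 0 := by
  rw [ck0, ck1, ← Submodule.Quotient.mk_smul, ← Submodule.Quotient.mk_smul,
    ← Submodule.Quotient.mk_add, Submodule.Quotient.mk_eq_zero]
  exact ⟨![1, 0], by ext k; fin_cases k <;> simp [Matrix.mulVec, dotProduct]⟩

lemma ck_rel1 : Yv • ck1 p q + (2 * p) • ck0 p q = 0 := by
  rw [ck0, ck1, ← Submodule.Quotient.mk_smul, ← Submodule.Quotient.mk_smul,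
    ← Submodule.Quotient.mk_add, Submodule.Quotient.mk_eq_zero]
  exact ⟨![0, 1], by ext k; fin_cases k <;> simp [Matrix.mulVec, dotProduct]⟩

lemma ck_span : Submodule.span Rpoly {ck0 p q, ck1 p q} = ⊤ := by
  rw [eq_top_iff]
  rintro w -
  obtain ⟨w, rfl⟩ := Submodule.Quotient.mk_surjective _ w
  refine Submodule.mem_span_pair.2 ⟨w 0, w 1, ?_⟩
  rw [ck0, ck1, ← Submodule.Quotient.mk_smul, ← Submodule.Quotient.mk_smul,
    ← Submodule.Quotient.mk_add]
  congr 1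
  ext k; fin_cases k <;> simp

variable {p q}

/-- The universal property of the cokernel of `[[Y, 2p], [2q, Y]]`. -/
lemma ck_exists_hom {s t : N} (h0 : Yv • s + (2 * q) • t = 0) (h1 : Yv • t + (2 * p) • s = 0) :
    ∃ f : ck p q →ₗ[Rpoly] N, f (ck0 p q) = s ∧ f (ck1 p q) = t := by
  let F : (Fin 2 → Rpoly) →ₗ[Rpoly] N := Fintype.linearCombination Rpoly ![s, t]
  have hF : ∀ w, F w = w 0 • s + w 1 • t := fun w => by
    simp [F, Fintype.linearCombination_apply]
  refine ⟨Submodule.liftQ _ F ?_, ?_, ?_⟩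
  · rintro _ ⟨w, rfl⟩
    have h : F (Matrix.mulVecLin !![Yv, 2 * p; 2 * q, Yv] w) =
        w 0 • (Yv • s + (2 * q) • t) + w 1 • (Yv • t + (2 * p) • s) := by
      rw [hF]
      simp [Matrix.mulVec, dotProduct]
      module
    rw [LinearMap.mem_ker, h, h0, h1, smul_zero, smul_zero, add_zero]
  · exact (hF _).trans (by simp)
  · exact (hF _).trans (by simp)

end Coker

lemma Yv_smul_mon_u {i j : ℕ} (h : i + j = m) :
    Yv • mon m i 0 = (2 * Xv ^ i) • mon m 0 j := by
  rw [← two_Hv, mul_smul, mul_smul, Hv_smul_mon, Xv_pow_smul_mon, mon_shift]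
  congr 2 <;> omega

lemma Yv_smul_mon_v {i j : ℕ} (h : i + j = m) :
    Yv • mon m 0 j = (2 * Xv ^ j) • mon m i 0 := by
  rw [← two_Hv, mul_smul, mul_smul, Hv_smul_mon, Xv_pow_smul_mon]
  congr 2 <;> omega

/-- The cokernel is the piece of degree `i`, with `u = e₁` and `v = -e₂`. -/
lemma nonempty_piece_coker (hi : i ≤ m) :
    Nonempty (Piece m i (coker !![Yv, 2 * Xv ^ (m - i); 2 * Xv ^ i, Yv])) := by
  obtain ⟨f, hf0, hf1⟩ := ck_exists_hom (p := Xv ^ (m - i)) (q := Xv ^ i)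
    (s := mon m i 0) (t := - mon m 0 (m - i))
    (by rw [Yv_smul_mon_u (Nat.add_sub_cancel' hi)]; module)
    (by rw [smul_neg, Yv_smul_mon_v (Nat.add_sub_cancel' hi)]; module)
  exact ⟨{
    u := ck0 _ _
    v := - ck1 _ _
    Hv_smul_u := half_smul (ck_rel0 _ _)
    Hv_smul_v := by rw [smul_neg, half_smul (ck_rel1 _ _), smul_neg, neg_neg]
    span_eq := by
      rw [Submodule.span_insert, ← Set.neg_singleton, Submodule.span_neg, ← Submodule.span_insert,
        ck_span]
    toQz := f
    toQz_u := hf0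
    toQz_v := by rw [map_neg, hf1, neg_neg] }⟩

/-- The same cokernel is also the piece of degree `m - i`, with `u = e₂` and `v = -e₁`. This is why
each summand occurs twice. -/
lemma nonempty_piece_coker' (hi : i ≤ m) :
    Nonempty (Piece m (m - i) (coker !![Yv, 2 * Xv ^ (m - i); 2 * Xv ^ i, Yv])) := by
  obtain ⟨f, hf0, hf1⟩ := ck_exists_hom (p := Xv ^ (m - i)) (q := Xv ^ i)
    (s := - mon m 0 i) (t := mon m (m - i) 0)
    (by rw [smul_neg, Yv_smul_mon_v (Nat.sub_add_cancel hi)]; module)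
    (by rw [Yv_smul_mon_u (Nat.sub_add_cancel hi)]; module)
  exact ⟨{
    u := ck1 _ _
    v := - ck0 _ _
    Hv_smul_u := half_smul (ck_rel1 _ _)
    Hv_smul_v := by rw [smul_neg, half_smul (ck_rel0 _ _), smul_neg, neg_neg, Nat.sub_sub_self hi]
    span_eq := by
      rw [Submodule.span_insert, ← Set.neg_singleton, Submodule.span_neg, ← Submodule.span_insert,
        Set.pair_comm, ck_span]
    toQz := f
    toQz_u := hf1
    toQz_v := by rw [map_neg, hf0, neg_neg, Nat.sub_sub_self hi] }⟩

/-- The universal property of `R/(r)`. -/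
lemma cyclic_exists_hom {r : Rpoly} {s : N} (h : r • s = 0) :
    ∃ f : (Rpoly ⧸ Ideal.span {r}) →ₗ[Rpoly] N, ∀ a, f (Submodule.Quotient.mk a) = a • s := by
  refine ⟨Submodule.liftQ _ (LinearMap.toSpanSingleton Rpoly N s) ?_, fun a => rfl⟩
  rw [Ideal.span, Submodule.span_le]
  rintro _ rfl
  exact h

lemma four_Hv_sq : Yv ^ 2 = 4 * Hv ^ 2 := by rw [← two_Hv]; ring

/-- In degree `0` one generator suffices: `u = 1` and `v = Y/2`. -/
lemma nonempty_piece_zero :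
    Nonempty (Piece m 0 (Rpoly ⧸ Ideal.span {Yv ^ 2 - 4 * Xv ^ m})) := by
  obtain ⟨f, hf⟩ := cyclic_exists_hom (r := Yv ^ 2 - 4 * Xv ^ m) (s := mon m 0 0) (by
    rw [four_Hv_sq, ← mul_sub, mul_smul, sub_smul, Hv_pow_smul_mon, Xv_pow_smul_mon,
      two_mul, ← add_assoc, mon_shift, sub_self, smul_zero])
  exact ⟨{
    u := Submodule.Quotient.mk 1
    v := Submodule.Quotient.mk Hv
    Hv_smul_u := by rw [← Submodule.Quotient.mk_smul, pow_zero, one_smul, smul_eq_mul, mul_one]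
    Hv_smul_v := by
      rw [← Submodule.Quotient.mk_smul, ← Submodule.Quotient.mk_smul, Submodule.Quotient.eq]
      refine Ideal.mem_span_singleton.2 ⟨C (1 / 2) * C (1 / 2), ?_⟩
      have h2 : (2 : Rpoly) * C (1 / 2) = 1 := by simpa [mul_comm] using half_two 1
      rw [four_Hv_sq, Nat.sub_zero, smul_eq_mul, smul_eq_mul]
      linear_combination (-(Hv ^ 2 - Xv ^ m) * (2 * C (1 / 2) + 1)) * h2
    span_eq := by
      rw [eq_top_iff]
      rintro w -
      obtain ⟨w, rfl⟩ := Submodule.Quotient.mk_surjective _ w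
      refine Submodule.mem_span_pair.2 ⟨w, 0, ?_⟩
      rw [zero_smul, add_zero, ← Submodule.Quotient.mk_smul, smul_eq_mul, mul_one]
    toQz := f
    toQz_u := by rw [hf, one_smul]
    toQz_v := by rw [hf, Hv_smul_mon, mon_shift, zero_add, Nat.sub_zero] }⟩

/-- In degree `h = m/2` the action of `Y/2` is diagonalized by `x^h - y^h` and `x^h + y^h`, with
eigenvalues `-X^h` and `X^h`; the generators are `u = (1, 1)` and `v = (-1, 1)`. -/
lemma nonempty_piece_half {h : ℕ} (hm : h + h = m) :
    Nonempty (Piece m h ((Rpoly ⧸ Ideal.span {Yv + 2 * Xv ^ h}) ×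
      (Rpoly ⧸ Ideal.span {Yv - 2 * Xv ^ h}))) := by
  have h2 : (2 : Rpoly) * C (1 / 2) = 1 := by simpa [mul_comm] using half_two 1
  have hu := Yv_smul_mon_u hm
  have hv := Yv_smul_mon_v hm
  obtain ⟨f, hf⟩ := cyclic_exists_hom (r := Yv + 2 * Xv ^ h)
    (s := (C (1 / 2) : Rpoly) • (mon m h 0 - mon m 0 h)) (by
      rw [smul_comm, add_smul, smul_sub, hu, hv]; module)
  obtain ⟨g, hg⟩ := cyclic_exists_hom (r := Yv - 2 * Xv ^ h)
    (s := (C (1 / 2) : Rpoly) • (mon m h 0 + mon m 0 h)) (by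
      rw [smul_comm, sub_smul, smul_add, hu, hv]; module)
  have hq1 : Yv • (Submodule.Quotient.mk 1 : Rpoly ⧸ Ideal.span {Yv + 2 * Xv ^ h}) +
      (2 * Xv ^ h) • Submodule.Quotient.mk 1 = 0 := by
    rw [← add_smul, ← Submodule.Quotient.mk_smul, Submodule.Quotient.mk_eq_zero]
    exact Ideal.mem_span_singleton.2 ⟨1, rfl⟩
  have hq2 : Yv • (Submodule.Quotient.mk 1 : Rpoly ⧸ Ideal.span {Yv - 2 * Xv ^ h}) +
      (2 * Xv ^ h) • -Submodule.Quotient.mk 1 = 0 := by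
    rw [smul_neg, ← sub_eq_add_neg, ← sub_smul, ← Submodule.Quotient.mk_smul,
      Submodule.Quotient.mk_eq_zero]
    exact Ideal.mem_span_singleton.2 ⟨1, rfl⟩
  have hk : m - h = h := by omega
  exact ⟨{
    u := (Submodule.Quotient.mk 1, Submodule.Quotient.mk 1)
    v := (-Submodule.Quotient.mk 1, Submodule.Quotient.mk 1)
    Hv_smul_u := by
      ext1
      · exact half_smul hq1
      · exact (half_smul hq2).trans (by rw [neg_neg]; rfl)
    Hv_smul_v := by
      rw [hk]
      ext1
      · exact (smul_neg _ _).trans ((congrArg Neg.neg (half_smul hq1)).trans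
          (by rw [smul_neg, neg_neg]; rfl))
      · exact (half_smul hq2).trans (by rw [neg_neg]; rfl)
    span_eq := by
      rw [eq_top_iff]
      rintro ⟨w, w'⟩ -
      obtain ⟨w, rfl⟩ := Submodule.Quotient.mk_surjective _ w
      obtain ⟨w', rfl⟩ := Submodule.Quotient.mk_surjective _ w'
      refine Submodule.mem_span_pair.2 ⟨C (1 / 2) * (w + w'), C (1 / 2) * (w' - w), ?_⟩
      ext1
      · change _ • Submodule.Quotient.mk 1 + _ • -Submodule.Quotient.mk 1 = _
        rw [smul_neg, ← sub_eq_add_neg, ← sub_smul, ← Submodule.Quotient.mk_smul]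
        congr 1
        rw [smul_eq_mul]
        linear_combination w * h2
      · change _ • Submodule.Quotient.mk 1 + _ • Submodule.Quotient.mk 1 = _
        rw [← add_smul, ← Submodule.Quotient.mk_smul]
        congr 1
        rw [smul_eq_mul]
        linear_combination w' * h2
    toQz := f.coprod g
    toQz_u := by
      rw [LinearMap.coprod_apply, hf, hg, one_smul, one_smul, ← smul_add,
        show mon m h 0 - mon m 0 h + (mon m h 0 + mon m 0 h) = (2 : Rpoly) • mon m h 0 by module,
        smul_smul, mul_comm, h2, one_smul]
    toQz_v := by
      rw [LinearMap.coprod_apply, map_neg, hf, hg, one_smul, one_smul, ← smul_neg, ← smul_add,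
        show -(mon m h 0 - mon m 0 h) + (mon m h 0 + mon m 0 h) = (2 : Rpoly) • mon m 0 h by
          module,
        smul_smul, mul_comm, h2, one_smul, hk] }⟩

/-! ### Assembling the decomposition -/

/-- The degree of each summand: the two copies of the `j`-th cokernel (counted from `0`) have
degrees `j + 1` and `m - (j + 1)`, and the last two summands have degrees `m/2` and `0`. -/
def pieceIndex (m n : ℕ) : (Σ _ : Fin n, Fin 2) ⊕ (Unit ⊕ Unit) → ℕ
  | .inl ⟨j, 0⟩ => j + 1
  | .inl ⟨j, 1⟩ => m - (j + 1)
  | .inr (.inl _) => m / 2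
  | .inr (.inr _) => 0

/-- The exponent `d` for which the summand is realized as the cokernel of
`[[Y, 2X^(m-d)], [2X^d, Y]]`. Both copies of a repeated summand have the same `d`. -/
def cokerIndex (m n : ℕ) : (Σ _ : Fin n, Fin 2) ⊕ (Unit ⊕ Unit) → ℕ
  | .inl ⟨j, _⟩ => j + 1
  | .inr (.inl _) => m / 2
  | .inr (.inr _) => 0

lemma pieceIndex_lt {m n h : ℕ} (hn : n + 1 = h) (hm : m = h + h) (k) :
    pieceIndex m n k < m := by
  rcases k with ⟨⟨j, hj⟩, t⟩ | _ | _
  · fin_cases t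
    · change j + 1 < m; omega
    · change m - (j + 1) < m; omega
  · change m / 2 < m; omega
  · change 0 < m; omega

lemma pieceIndex_injective {m n h : ℕ} (hn : n + 1 = h) (hm : m = h + h) :
    Function.Injective (pieceIndex m n) := by
  rintro (⟨⟨j, hj⟩, t⟩ | _ | _) (⟨⟨j', hj'⟩, t'⟩ | _ | _) hjj <;> (try fin_cases t) <;>
    (try fin_cases t') <;> simp [pieceIndex] at hjj ⊢ <;> omega

lemma pieceIndex_surj {m n h i : ℕ} (hn : n + 1 = h) (hm : m = h + h) (hi : i < m) :
    ∃ k, pieceIndex m n k = i := by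
  rcases Nat.eq_zero_or_pos i with rfl | hi0
  · exact ⟨.inr (.inr ()), rfl⟩
  rcases lt_trichotomy i h with hlt | rfl | hgt
  · refine ⟨.inl ⟨⟨i - 1, by omega⟩, 0⟩, ?_⟩
    change i - 1 + 1 = i; omega
  · refine ⟨.inr (.inl ()), ?_⟩
    change m / 2 = i; omega
  · refine ⟨.inl ⟨⟨m - i - 1, by omega⟩, 1⟩, ?_⟩
    change m - (m - i - 1 + 1) = i; omega

/-- All summands are first taken as cokernels indexed by one finite type; those of degree `0` and
`m/2` are then replaced by the cyclic modules, which are pieces of the same degrees. -/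
theorem main_equiv (m : ℕ) (hm : 4 ≤ m) (hme : Even m) :
    Nonempty (Qz m ≃ₗ[Rpoly]
      ((j : Fin ((m - 2) / 2)) → Fin 2 →
          coker !![Yv, 2 * Xv ^ (m - ((j : ℕ) + 1)); 2 * Xv ^ ((j : ℕ) + 1), Yv]) ×
      (Rpoly ⧸ Ideal.span {Yv + 2 * Xv ^ (m / 2)}) ×
      (Rpoly ⧸ Ideal.span {Yv - 2 * Xv ^ (m / 2)}) ×
      (Rpoly ⧸ Ideal.span {Yv ^ 2 - 4 * Xv ^ m})) := by
  obtain ⟨h, rfl⟩ := hme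
  have hh : (h + h) / 2 = h := by omega
  set n := (h + h - 2) / 2 with hn
  have hn' : n + 1 = h := by omega
  set m := h + h with hmdef
  let N : (Σ _ : Fin n, Fin 2) ⊕ (Unit ⊕ Unit) → Type := fun k =>
    coker !![Yv, 2 * Xv ^ (m - cokerIndex m n k); 2 * Xv ^ cokerIndex m n k, Yv]
  have hP : ∀ k, Nonempty (Piece m (pieceIndex m n k) (N k)) := by
    rintro (⟨⟨j, hj⟩, t⟩ | _ | _)
    · fin_cases t
      · exact nonempty_piece_coker (i := j + 1) (by omega)
      · exact nonempty_piece_coker' (i := j + 1) (by omega)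
    · exact nonempty_piece_coker (i := m / 2) (by omega)
    · exact nonempty_piece_coker (i := 0) (by omega)
  let P := fun k => (hP k).some
  obtain ⟨e⟩ := nonempty_equiv_pi (m := m) (by omega) (pieceIndex m n)
    (pieceIndex_lt hn' hmdef) (pieceIndex_injective hn' hmdef)
    (fun i hi => pieceIndex_surj hn' hmdef hi) N P
  obtain ⟨e0⟩ := (nonempty_piece_coker (m := m) (i := 0) (by omega)).elim fun p =>
    (nonempty_piece_zero (m := m)).elim fun p' => p.nonempty_equiv p' (by omega)
  obtain ⟨eh⟩ := (nonempty_piece_coker (m := m) (i := m / 2) (by omega)).elim fun p =>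
    (nonempty_piece_half (m := m) (h := m / 2) (by omega)).elim fun p' =>
      p.nonempty_equiv p' (by omega)
  let e1 := LinearEquiv.sumPiEquivProdPi Rpoly _ _ N
  let e2 := LinearEquiv.piCurry Rpoly
    (fun (j : Fin n) (_ : Fin 2) => coker !![Yv, 2 * Xv ^ (m - ((j : ℕ) + 1));
      2 * Xv ^ ((j : ℕ) + 1), Yv])
  let e3 := (LinearEquiv.sumPiEquivProdPi Rpoly _ _ fun k => N (.inr k)).trans
    ((LinearEquiv.piUnique Rpoly fun k => N (.inr (.inl k))).prodCongr
      (LinearEquiv.piUnique Rpoly fun k => N (.inr (.inr k))))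
  exact ⟨(e.trans e1).trans (e2.prodCongr
    ((e3.trans (eh.prodCongr e0)).trans (LinearEquiv.prodAssoc Rpoly _ _ _)))⟩

theorem stmt10 (m : ℕ) (hm : 4 ≤ m) (hme : Even m) :
    letI : Module Rpoly (Spoly ⧸ Ideal.span {zpol m}) :=
      ((Ideal.Quotient.mk (Ideal.span {zpol m})).comp (phi m)).toModule
    Nonempty ((Spoly ⧸ Ideal.span {zpol m}) ≃ₗ[Rpoly]
      ((j : Fin ((m - 2) / 2)) → Fin 2 →
          coker !![Yv, 2 * Xv ^ (m - ((j : ℕ) + 1)); 2 * Xv ^ ((j : ℕ) + 1), Yv]) ×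
      (Rpoly ⧸ Ideal.span {Yv + 2 * Xv ^ (m / 2)}) ×
      (Rpoly ⧸ Ideal.span {Yv - 2 * Xv ^ (m / 2)}) ×
      (Rpoly ⧸ Ideal.span {Yv ^ 2 - 4 * Xv ^ m})) :=
  main_equiv m hm hme
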